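/- Let I be a finite type (the indices of the Bloom Filters touched by a label), let m, k, n : I → ℕ with m i ≥ 1 for all i, and fix targets j : (i : I) → Fin (k i) → Fin (m i). Under the uniform probability distribution on the finite set of all dependent functions g : (i : I) → Fin (k i) → (Fin (k i · n i) → Fin (m i)) (filter i receiving k i mutually independent families of k i · n i uniformly random hash evaluations, independently across filters), the expected cardinality of the random set {i ∈ I | for every a ∈ Fin (k i), the target j i a lies in the range of g i a} equals Σ_{i ∈ I} (1 - (1 - 1/(m i))^{k i · n i})^{k i}. -/

import Mathlib

/-! By linearity of expectation the expected number of false-positive filters is the sum over the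
filters of the probability that all targets of filter `i` are hit. That event depends only on the
coordinate `g i`, so its probability may be computed for a uniformly random `g i`. There the rows
`g i a` are independent, and a row misses its target exactly when each of its `k i * n i`
independent evaluations does. Uniform probabilities of events are densities `Finset.dens`. -/

section Density

open Finset
open scoped BigOperators

theorem cast_dens_compl {𝕜 α : Type*} [DivisionRing 𝕜] [CharZero 𝕜] [Fintype α] [DecidableEq α]
    [Nonempty α] (s : Finset α) : (sᶜ.dens : 𝕜) = 1 - s.dens := by
  rw [eq_sub_iff_add_eq, ← NNRat.cast_add, ← dens_union_of_disjoint disjoint_compl_left,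
    union_comm, union_compl, dens_univ, NNRat.cast_one]

theorem dens_piFinset {ι : Type*} {α : ι → Type*} [Fintype ι] [DecidableEq ι]
    [∀ i, Fintype (α i)] (s : ∀ i, Finset (α i)) :
    (Fintype.piFinset s).dens = ∏ i, (s i).dens := by
  simp only [dens_eq_card_div_card, Fintype.card_piFinset, Fintype.card_pi, Nat.cast_prod,
    prod_div_distrib]

theorem dens_filter_apply {ι : Type*} {α : ι → Type*} [Fintype ι] [DecidableEq ι]
    [∀ i, Fintype (α i)] [∀ i, Nonempty (α i)] (i : ι) (p : α i → Prop) [DecidablePred p] :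
    dens {f : ∀ i, α i | p (f i)} = dens {x | p x} := by
  classical
  have cylinder : ({f | p (f i)} : Finset (∀ i, α i)) =
      Fintype.piFinset (Function.update (fun _ ↦ univ) i (univ.filter p)) := by
    rw [Fintype.piFinset_update_eq_filter_piFinset_mem _ _ (subset_univ _)]
    simp
  rw [cylinder, dens_piFinset, Fintype.prod_eq_single i, Function.update_self]
  intro j hj
  rw [Function.update_of_ne hj, dens_univ]

theorem expect_card_filter {𝕜 Ω ι : Type*} [Semifield 𝕜] [CharZero 𝕜] [Fintype Ω] [Fintype ι]
    (r : Ω → ι → Prop) [∀ ω i, Decidable (r ω i)] :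
    𝔼 ω, (#{i | r ω i} : 𝕜) = ∑ i, (dens {ω | r ω i} : 𝕜) := by
  simp only [natCast_card_filter, expect_sum_comm]
  simp only [Fintype.expect_eq_sum_div_card, sum_boole, nnratCast_dens]

theorem dens_exists_apply_eq {𝕜 ι : Type*} {β : ι → Type*} [Field 𝕜] [CharZero 𝕜] [Fintype ι]
    [DecidableEq ι] [∀ b, Fintype (β b)] [∀ b, DecidableEq (β b)] (t : ∀ b, β b) :
    (dens {u : ∀ b, β b | ∃ b, u b = t b} : 𝕜) = 1 - ∏ b, (1 - 1 / (Fintype.card (β b) : 𝕜)) := by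
  have (b : ι) : Nonempty (β b) := ⟨t b⟩
  have hit_eq_compl_miss : ({u | ∃ b, u b = t b} : Finset (∀ b, β b)) =
      (Fintype.piFinset fun b ↦ {t b}ᶜ)ᶜ := by
    ext u
    simp
  rw [hit_eq_compl_miss, cast_dens_compl, dens_piFinset, NNRat.cast_prod]
  simp only [cast_dens_compl, dens_singleton, NNRat.cast_inv, NNRat.cast_natCast, one_div]

theorem dens_forall_exists_apply_eq {𝕜 κ : Type*} {ι β : κ → Type*} [Field 𝕜] [CharZero 𝕜]
    [Fintype κ] [DecidableEq κ] [∀ a, Fintype (ι a)] [∀ a, DecidableEq (ι a)]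
    [∀ a, Fintype (β a)] [∀ a, DecidableEq (β a)] (t : ∀ a, β a) :
    (dens {u : ∀ a, ι a → β a | ∀ a, ∃ b, u a b = t a} : 𝕜) =
      ∏ a, (1 - (1 - 1 / (Fintype.card (β a) : 𝕜)) ^ Fintype.card (ι a)) := by
  have hits_eq_pi : ({u | ∀ a, ∃ b, u a b = t a} : Finset (∀ a, ι a → β a)) =
      Fintype.piFinset fun a ↦ {v | ∃ b, v b = t a} := by
    ext u
    simp
  rw [hits_eq_pi, dens_piFinset, NNRat.cast_prod]
  refine prod_congr rfl fun a _ ↦ ?_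
  rw [dens_exists_apply_eq fun _ ↦ t a, prod_const, card_univ]

theorem bloom_vector_expected_fp_general {I : Type*} {κ ι β : I → Type*}
    [Fintype I] [DecidableEq I] [∀ i, Fintype (κ i)] [∀ i, DecidableEq (κ i)]
    [∀ i, Fintype (ι i)] [∀ i, DecidableEq (ι i)] [∀ i, Fintype (β i)] [∀ i, DecidableEq (β i)]
    (t : ∀ i, κ i → β i) :
    𝔼 g : ∀ i, κ i → ι i → β i, (#{i | ∀ a, ∃ b, g i a b = t i a} : ℝ) =
      ∑ i, (1 - (1 - 1 / (Fintype.card (β i) : ℝ)) ^ Fintype.card (ι i)) ^ Fintype.card (κ i) := by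
  have (i : I) : Nonempty (κ i → ι i → β i) := ⟨fun a _ ↦ t i a⟩
  rw [expect_card_filter]
  refine sum_congr rfl fun i _ ↦ ?_
  rw [dens_filter_apply (α := fun i ↦ κ i → ι i → β i) i fun u ↦ ∀ a, ∃ b, u a b = t i a,
    dens_forall_exists_apply_eq, prod_const, card_univ]

end Density

/-- Bloom Vector expected number of false-positive filters: under the uniform distribution
on dependent functions `g : (i : I) → Fin (k i) → (Fin (k i * n i) → Fin (m i))`, the
expected cardinality of `{i | ∀ a, j i a ∈ range (g i a)}` equals
`Σ_i (1 - (1 - 1/(m i))^{k i · n i})^{k i}`. -/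
theorem bloom_vector_expected_fp (I : Type*) [Fintype I] [DecidableEq I]
    (m k n : I → ℕ) (hm : ∀ i, 1 ≤ m i)
    (j : (i : I) → Fin (k i) → Fin (m i)) :
    ∑ g : (i : I) → Fin (k i) → (Fin (k i * n i) → Fin (m i)),
        (1 / (Fintype.card ((i : I) → Fin (k i) → (Fin (k i * n i) → Fin (m i))) : ℝ)) *
          ((Finset.univ.filter
              (fun i : I => ∀ a : Fin (k i), ∃ b, g i a b = j i a)).card : ℝ) =
      ∑ i : I, (1 - (1 - 1 / (m i : ℝ)) ^ (k i * n i)) ^ (k i) := by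
  rw [← Finset.mul_sum, one_div_mul_eq_div, ← Fintype.expect_eq_sum_div_card]
  convert bloom_vector_expected_fp_general (ι := fun i ↦ Fin (k i * n i)) j <;> simp
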